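/- Let R be a smooth function on a neighborhood of the origin in ℝ² with nonvanishing Taylor series, let M > 0 and α = α_M(R). Let k ≥ 1 be an integer, r ∈ ℝ, δ₀ > 0 and C₀ > 0, and suppose |d^k/dy^k [R_M(1,y)]| > C₀ for all y ∈ [r − δ₀, r + δ₀]. Then there exists δ > 0 such that |∂_y^k R(x,y)| > (C₀/2) x^{α − kM} for all (x,y) with 0 < x < δ and (r − δ₀) x^M ≤ y ≤ (r + δ₀) x^M. -/

import Mathlib

open MeasureTheory Set Filter Topology

noncomputable section

/-- Iterated partial derivative `∂ₓᵃ ∂ᵧᵇ R` at `(x, y)`. -/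
def pderiv2 (R : ℝ → ℝ → ℝ) (a b : ℕ) (x y : ℝ) : ℝ :=
  iteratedDeriv a (fun x' => iteratedDeriv b (fun y' => R x' y') y) x

/-- Taylor coefficient `R_{ab} = ∂ₓᵃ ∂ᵧᵇ R(0,0) / (a! b!)`. -/
def tcoeff (R : ℝ → ℝ → ℝ) (a b : ℕ) : ℝ :=
  pderiv2 R a b 0 0 / (Nat.factorial a * Nat.factorial b)

/-- The support of the Taylor series of `R` at the origin. -/
def tsupp (R : ℝ → ℝ → ℝ) : Set (ℕ × ℕ) := {p | tcoeff R p.1 p.2 ≠ 0}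

/-- The Newton polygon of `R`. -/
def newtonPolygon (R : ℝ → ℝ → ℝ) : Set (ℝ × ℝ) :=
  convexHull ℝ (⋃ p ∈ tsupp R, {q : ℝ × ℝ | (p.1 : ℝ) ≤ q.1 ∧ (p.2 : ℝ) ≤ q.2})

/-- The Newton distance of `R`. -/
def newtonDist (R : ℝ → ℝ → ℝ) : ℝ := sInf {t : ℝ | (t, t) ∈ newtonPolygon R}

/-- `e` is a compact edge of `N(R)` of slope `-1/M` (with `M > 0`): it is the
(one-dimensional, compact) face of the Newton polygon cut out by a supporting line
`t₁ + M t₂ = c`. -/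
def IsCompactEdge (R : ℝ → ℝ → ℝ) (M : ℝ) (e : Set (ℝ × ℝ)) : Prop :=
  0 < M ∧ ∃ c : ℝ, (∀ q ∈ newtonPolygon R, c ≤ q.1 + M * q.2) ∧
    e = {q ∈ newtonPolygon R | q.1 + M * q.2 = c} ∧
    ∃ v w : ℝ × ℝ, v ≠ w ∧ e = segment ℝ v w

/-- The edge polynomial `R_e(x,y) = Σ_{(a,b) ∈ e ∩ supp R} R_{ab} x^a y^b`. -/
def edgePoly (R : ℝ → ℝ → ℝ) (e : Set (ℝ × ℝ)) (x y : ℝ) : ℝ :=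
  ∑' p : ℕ × ℕ,
    Set.indicator {p : ℕ × ℕ | ((p.1 : ℝ), (p.2 : ℝ)) ∈ e}
      (fun p => tcoeff R p.1 p.2 * x ^ p.1 * y ^ p.2) p

/-- `p` has a zero of order exactly `m` at `y₀`. -/
def ZeroOfOrder (p : ℝ → ℝ) (m : ℕ) (y₀ : ℝ) : Prop :=
  (∀ j < m, iteratedDeriv j p y₀ = 0) ∧ iteratedDeriv m p y₀ ≠ 0

/-- `R` is in nonadapted coordinates: the bisectrix meets the interior of a compact
edge `e` such that `R_e(1, ⬝)` has a real zero of order greater than `d(R)`. -/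
def IsNonadapted (R : ℝ → ℝ → ℝ) : Prop :=
  ∃ (M : ℝ) (e : Set (ℝ × ℝ)) (v w : ℝ × ℝ), IsCompactEdge R M e ∧ v ≠ w ∧
    e = segment ℝ v w ∧ (∃ t : ℝ, (t, t) ∈ openSegment ℝ v w) ∧
    ∃ (y₀ : ℝ) (m : ℕ), newtonDist R < (m : ℝ) ∧
      ZeroOfOrder (fun y => edgePoly R e 1 y) m y₀

/-- `R` is in generic adapted coordinates: adapted coordinates, every compact edge has slope
at least `-1`, and the Newton polygon meets the `t₂`-axis. -/
def GenericAdapted (R : ℝ → ℝ → ℝ) : Prop :=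
  ¬ IsNonadapted R ∧ (∀ M e, IsCompactEdge R M e → 1 ≤ M) ∧
    ∃ t : ℝ, ((0 : ℝ), t) ∈ newtonPolygon R

/-- `α_M(R) = min {a + M b : (a,b) ∈ supp R}`. -/
def alphaM (R : ℝ → ℝ → ℝ) (M : ℝ) : ℝ :=
  sInf {t : ℝ | ∃ p ∈ tsupp R, t = (p.1 : ℝ) + M * p.2}

/-- `R_M`, the sum of the terms of the Taylor series of `R` of minimal `M`-weighted degree. -/
def RMpart (R : ℝ → ℝ → ℝ) (M : ℝ) (x y : ℝ) : ℝ :=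
  ∑' p : ℕ × ℕ,
    Set.indicator {p : ℕ × ℕ | p ∈ tsupp R ∧ (p.1 : ℝ) + M * p.2 = alphaM R M}
      (fun p => tcoeff R p.1 p.2 * x ^ p.1 * y ^ p.2) p

/-- The Hessian determinant of `f`. -/
def hessDet (f : ℝ → ℝ → ℝ) (x y : ℝ) : ℝ :=
  pderiv2 f 2 0 x y * pderiv2 f 0 2 x y - (pderiv2 f 1 1 x y) ^ 2

/-- `F*(x,y) = (Σ_{(a,b) vertex of N(F)} x^{2a} y^{2b})^{1/2}`. -/
def vertexFn (F : ℝ → ℝ → ℝ) (x y : ℝ) : ℝ :=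
  Real.sqrt (∑' p : ℕ × ℕ,
    Set.indicator
      {p : ℕ × ℕ | ((p.1 : ℝ), (p.2 : ℝ)) ∈ (newtonPolygon F).extremePoints ℝ}
      (fun p => x ^ (2 * p.1) * y ^ (2 * p.2)) p)

/-!
On the curve `y = t x ^ M` the monomial `x ^ a * y ^ b` equals `t ^ b * x ^ (a + M b)`. Hence in the
Taylor expansion of `∂_y^k R` the terms of least weighted degree `α - k M`, which together form
`∂_y^k R_M`, dominate, and `∂_y^k R (x, t x ^ M) = x ^ (α - k M) * (∂_y^k R_M (1, t) + o(1))` as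
`x → 0⁺`, uniformly for bounded `t`.
-/

section TaylorRemainder

open Asymptotics
open scoped ContDiff Nat

theorem contDiffAt_iteratedDeriv_snd {𝕜 E G : Type*} [NontriviallyNormedField 𝕜]
    [NormedAddCommGroup E] [NormedSpace 𝕜 E] [NormedAddCommGroup G] [NormedSpace 𝕜 G]
    {F : E → 𝕜 → G} {p₀ : E × 𝕜} {m N : ℕ∞ω} (n : ℕ) (hmn : m + n ≤ N)
    (hF : ContDiffAt 𝕜 N (fun p : E × 𝕜 => F p.1 p.2) p₀) :
    ContDiffAt 𝕜 m (fun p : E × 𝕜 => iteratedDeriv n (F p.1) p.2) p₀ := by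
  induction n generalizing m with
  | zero => simpa using hF.of_le (by simpa using hmn)
  | succ n ih =>
    have hn : ContDiffAt 𝕜 (m + 1) (fun p : E × 𝕜 => iteratedDeriv n (F p.1) p.2) p₀ :=
      ih (by rwa [add_assoc, add_comm 1, ← Nat.cast_succ])
    have hslice : ContDiffAt 𝕜 (m + 1)
        (Function.uncurry fun (p : E × 𝕜) y => iteratedDeriv n (F p.1) y) (p₀, p₀.2) :=
      hn.comp (p₀, p₀.2) (contDiffAt_fst.fst.prodMk contDiffAt_snd)
    simpa only [iteratedDeriv_succ, fderiv_apply_one_eq_deriv] using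
      (hslice.fderiv contDiffAt_snd le_rfl).clm_apply (contDiffAt_const (c := (1 : 𝕜)))

theorem abs_sub_taylor_le {f : ℝ → ℝ} {C y₀ y : ℝ} {n : ℕ}
    (hf : ∀ t ∈ uIcc y₀ y, ContDiffAt ℝ (n + 1) f t)
    (hC : ∀ t ∈ uIcc y₀ y, |iteratedDeriv (n + 1) f t| ≤ C) :
    |f y - ∑ j ∈ Finset.range (n + 1), iteratedDeriv j f y₀ / j ! * (y - y₀) ^ j|
      ≤ C / (n + 1)! * |y - y₀| ^ (n + 1) := by
  rcases eq_or_ne y₀ y with rfl | hy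
  · simp [Finset.sum_range_succ']
  have htaylor : taylorWithinEval f n (uIcc y₀ y) y₀ y
      = ∑ j ∈ Finset.range (n + 1), iteratedDeriv j f y₀ / j ! * (y - y₀) ^ j := by
    rw [taylor_within_apply]
    refine Finset.sum_congr rfl fun j hj => ?_
    have hjn : (j : ℕ∞ω) ≤ n + 1 := mod_cast (Finset.mem_range.1 hj).le
    rw [iteratedDerivWithin_eq_iteratedDeriv (uniqueDiffOn_uIcc hy)
      ((hf y₀ left_mem_uIcc).of_le hjn) left_mem_uIcc, smul_eq_mul]
    ring
  obtain ⟨t, ht, hlagrange⟩ := taylor_mean_remainder_lagrange_iteratedDeriv hy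
    fun t ht => (hf t ht).contDiffWithinAt
  rw [← htaylor, hlagrange, abs_div, abs_mul, abs_pow, Nat.abs_cast, mul_div_right_comm]
  gcongr
  exact hC t (uIoo_subset_uIcc_self ht)

theorem isBigO_sub_taylor_snd {E : Type*} [NormedAddCommGroup E] [NormedSpace ℝ E]
    {F : E → ℝ → ℝ} {x₀ : E} {y₀ : ℝ} {n : ℕ}
    (hF : ContDiffAt ℝ (n + 1) (fun p : E × ℝ => F p.1 p.2) (x₀, y₀)) :
    (fun p : E × ℝ => F p.1 p.2
        - ∑ j ∈ Finset.range (n + 1), iteratedDeriv j (F p.1) y₀ / j ! * (p.2 - y₀) ^ j)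
      =O[𝓝 (x₀, y₀)] fun p => (p.2 - y₀) ^ (n + 1) := by
  have hbound : ∀ᶠ p : E × ℝ in 𝓝 (x₀, y₀), |iteratedDeriv (n + 1) (F p.1) p.2|
      ≤ |iteratedDeriv (n + 1) (F x₀) y₀| + 1 :=
    (contDiffAt_iteratedDeriv_snd (m := 0) (n + 1) (by simp) hF).continuousAt.abs
      |>.eventually_le_const (lt_add_one _)
  obtain ⟨ε, hε, hball⟩ := Metric.eventually_nhds_iff_ball.1
    ((hF.eventually (by exact_mod_cast ENat.natCast_ne_top (n + 1))).and hbound)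
  refine IsBigO.of_bound ((|iteratedDeriv (n + 1) (F x₀) y₀| + 1) / (n + 1)!) ?_
  filter_upwards [Metric.ball_mem_nhds _ hε] with p hp
  have hsegment : ∀ t ∈ uIcc y₀ p.2, (p.1, t) ∈ Metric.ball (x₀, y₀) ε := by
    intro t ht
    rw [Metric.mem_ball, Prod.dist_eq, max_lt_iff] at hp ⊢
    have hdist := Real.dist_left_le_of_mem_uIcc ht
    rw [dist_comm y₀, dist_comm y₀] at hdist
    exact ⟨hp.1, hdist.trans_lt hp.2⟩
  rw [norm_pow]
  refine abs_sub_taylor_le (fun t ht => ?_) fun t ht => (hball _ (hsegment t ht)).2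
  exact (hball _ (hsegment t ht)).1.comp t (contDiffAt_const.prodMk contDiffAt_id)

theorem isBigO_sub_taylor {f : ℝ → ℝ} {x₀ : ℝ} {n : ℕ} (hf : ContDiffAt ℝ (n + 1) f x₀) :
    (fun x => f x - ∑ j ∈ Finset.range (n + 1), iteratedDeriv j f x₀ / j ! * (x - x₀) ^ j)
      =O[𝓝 x₀] fun x => (x - x₀) ^ (n + 1) :=
  have hf_snd : ContDiffAt ℝ (n + 1) (fun p : ℝ × ℝ => f p.2) (0, x₀) :=
    hf.comp (0, x₀) contDiffAt_snd
  (isBigO_sub_taylor_snd (F := fun _ => f) hf_snd).comp_tendsto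
    (tendsto_const_nhds.prodMk_nhds tendsto_id)

theorem isBigO_iteratedDeriv_sub_sum_pderiv2 {F : ℝ → ℝ → ℝ} {n b : ℕ}
    (hF : ContDiffAt ℝ (n + 1 + b) (fun p : ℝ × ℝ => F p.1 p.2) (0, 0)) :
    (fun x => iteratedDeriv b (F x) 0
        - ∑ a ∈ Finset.range (n + 1), pderiv2 F a b 0 0 / a ! * x ^ a)
      =O[𝓝 0] fun x => x ^ (n + 1) := by
  have hsmooth : ContDiffAt ℝ (n + 1) (fun x => iteratedDeriv b (F x) 0) 0 :=
    (contDiffAt_iteratedDeriv_snd b le_rfl hF).comp (f := fun x : ℝ => (x, (0 : ℝ))) 0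
      (contDiffAt_id.prodMk contDiffAt_const)
  simpa only [sub_zero, pderiv2] using isBigO_sub_taylor hsmooth

-- Expand in `y` first, then expand each coefficient in `x`; this uses up `2 * n + 1` derivatives.
theorem isBigO_sub_sum_tcoeff {F : ℝ → ℝ → ℝ} {n : ℕ}
    (hF : ContDiffAt ℝ (2 * n + 1) (fun p : ℝ × ℝ => F p.1 p.2) (0, 0)) :
    (fun p : ℝ × ℝ => F p.1 p.2 - ∑ q ∈ Finset.range (n + 1) ×ˢ Finset.range (n + 1),
        tcoeff F q.1 q.2 * p.1 ^ q.1 * p.2 ^ q.2)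
      =O[𝓝 (0, 0)] fun p => |p.1| ^ (n + 1) + |p.2| ^ (n + 1) := by
  have hx_le : (fun p : ℝ × ℝ => p.1 ^ (n + 1))
      =O[𝓝 (0, 0)] fun p => |p.1| ^ (n + 1) + |p.2| ^ (n + 1) :=
    .of_norm_le fun p => by rw [norm_pow]; exact le_add_of_nonneg_right (by positivity)
  have hy_le : (fun p : ℝ × ℝ => p.2 ^ (n + 1))
      =O[𝓝 (0, 0)] fun p => |p.1| ^ (n + 1) + |p.2| ^ (n + 1) :=
    .of_norm_le fun p => by rw [norm_pow]; exact le_add_of_nonneg_left (by positivity)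
  have hF_snd : (fun p : ℝ × ℝ => F p.1 p.2
      - ∑ b ∈ Finset.range (n + 1), iteratedDeriv b (F p.1) 0 / b ! * p.2 ^ b)
      =O[𝓝 (0, 0)] fun p => p.2 ^ (n + 1) := by
    have hn : (n + 1 : ℕ∞ω) ≤ 2 * n + 1 := by norm_cast; lia
    simpa only [sub_zero] using isBigO_sub_taylor_snd (hF.of_le hn)
  have hcoeff : ∀ b ∈ Finset.range (n + 1), (fun p : ℝ × ℝ => (iteratedDeriv b (F p.1) 0
      - ∑ a ∈ Finset.range (n + 1), pderiv2 F a b 0 0 / a ! * p.1 ^ a) * (p.2 ^ b / b !))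
      =O[𝓝 (0, 0)] fun p => p.1 ^ (n + 1) := by
    intro b hb
    have hnb : (n + 1 + b : ℕ∞ω) ≤ 2 * n + 1 := by
      have := Finset.mem_range.1 hb
      norm_cast
      lia
    have htaylor := (isBigO_iteratedDeriv_sub_sum_pderiv2 (hF.of_le hnb)).comp_tendsto
      (continuous_fst.tendsto ((0, 0) : ℝ × ℝ))
    have hbounded : (fun p : ℝ × ℝ => p.2 ^ b / b !) =O[𝓝 (0, 0)] fun _ => (1 : ℝ) :=
      (ContinuousAt.tendsto (by fun_prop)).isBigO_one ℝ
    simpa only [Function.comp_def, mul_one] using htaylor.mul hbounded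
  have hcoeff_sum := (IsBigO.fun_sum hcoeff).trans hx_le
  refine (hF_snd.trans hy_le).triangle (hcoeff_sum.congr_left fun p => ?_)
  rw [Finset.sum_product_right, ← Finset.sum_sub_distrib]
  refine Finset.sum_congr rfl fun b _ => ?_
  rw [sub_mul, Finset.sum_mul]
  congr 1
  · ring
  · refine Finset.sum_congr rfl fun a _ => ?_
    rw [tcoeff]
    field_simp

end TaylorRemainder

section WeightedDegree

/-- The degree `a + M b` of the monomial `xᵃ yᵇ` when `x` has weight `1` and `y` has weight `M`. -/
def weightedDegree (M : ℝ) (p : ℕ × ℕ) : ℝ := p.1 + M * p.2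

/-- The part of the Taylor series of `R` of `M`-weighted degree `γ`; the case `γ = alphaM R M`
is `RMpart R M`. The sum is finite when `0 < M`. -/
def weightedPart (R : ℝ → ℝ → ℝ) (M γ x y : ℝ) : ℝ :=
  ∑' p : ℕ × ℕ, {p | weightedDegree M p = γ}.indicator
    (fun p => tcoeff R p.1 p.2 * x ^ p.1 * y ^ p.2) p

theorem RMpart_eq_weightedPart (R : ℝ → ℝ → ℝ) (M : ℝ) :
    RMpart R M = weightedPart R M (alphaM R M) := by
  ext x y
  refine tsum_congr fun p => ?_
  classical
  by_cases hp : tcoeff R p.1 p.2 = 0 <;> simp [indicator_apply, weightedDegree, tsupp, hp]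

theorem alphaM_le_weightedDegree {R : ℝ → ℝ → ℝ} {M : ℝ} (hM : 0 ≤ M) {p : ℕ × ℕ}
    (hp : p ∈ tsupp R) : alphaM R M ≤ weightedDegree M p :=
  csInf_le ⟨0, by rintro _ ⟨q, -, rfl⟩; positivity⟩ ⟨p, hp, rfl⟩

theorem weightedDegree_add_snd (M : ℝ) (p : ℕ × ℕ) (k : ℕ) :
    weightedDegree M (p.1, p.2 + k) = weightedDegree M p + k * M := by
  simp only [weightedDegree, Nat.cast_add]
  ring

theorem mem_range_product_of_weightedDegree_eq {M γ : ℝ} (hM : 0 < M) {n : ℕ} (hn : γ < n)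
    (hMn : γ < M * n) {p : ℕ × ℕ} (hp : weightedDegree M p = γ) :
    p ∈ Finset.range n ×ˢ Finset.range n := by
  have hfst : (p.1 : ℝ) ≤ γ := hp ▸ le_add_of_nonneg_right (by positivity)
  have hsnd : M * p.2 ≤ γ := hp ▸ le_add_of_nonneg_left (by positivity)
  have hsnd_lt : (p.2 : ℝ) < n := lt_of_mul_lt_mul_left (hsnd.trans_lt hMn) hM.le
  rw [Finset.mem_product, Finset.mem_range, Finset.mem_range]
  exact ⟨mod_cast hfst.trans_lt hn, mod_cast hsnd_lt⟩

theorem exists_nat_weightedDegree_gt {M : ℝ} (hM : 0 < M) (γ : ℝ) :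
    ∃ n : ℕ, γ < n ∧ γ < M * n := by
  obtain ⟨n, hn⟩ := exists_nat_gt (max γ (γ / M))
  exact ⟨n, (le_max_left _ _).trans_lt hn, (div_lt_iff₀' hM).1 ((le_max_right _ _).trans_lt hn)⟩

theorem finite_setOf_weightedDegree_eq {M : ℝ} (hM : 0 < M) (γ : ℝ) :
    {p | weightedDegree M p = γ}.Finite := by
  obtain ⟨n, hn, hMn⟩ := exists_nat_weightedDegree_gt hM γ
  exact (Finset.finite_toSet _).subset fun p hp =>
    mem_range_product_of_weightedDegree_eq hM hn hMn hp

theorem weightedPart_eq_sum_filter (R : ℝ → ℝ → ℝ) {M γ : ℝ} {s : Finset (ℕ × ℕ)}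
    (hs : ∀ p, weightedDegree M p = γ → p ∈ s) (x y : ℝ) :
    weightedPart R M γ x y
      = ∑ p ∈ s with weightedDegree M p = γ, tcoeff R p.1 p.2 * x ^ p.1 * y ^ p.2 := by
  classical
  have hzero : ∀ p ∉ s, {p | weightedDegree M p = γ}.indicator
      (fun p => tcoeff R p.1 p.2 * x ^ p.1 * y ^ p.2) p = 0 :=
    fun p hp => by simp [indicator, mt (hs p) hp]
  rw [weightedPart, tsum_eq_sum hzero, Finset.sum_filter]
  simp only [indicator_apply, mem_ofPred_eq]

theorem pow_mul_mul_rpow_pow {x : ℝ} (hx : 0 < x) (M t : ℝ) (p : ℕ × ℕ) :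
    x ^ p.1 * (t * x ^ M) ^ p.2 = t ^ p.2 * x ^ weightedDegree M p := by
  rw [weightedDegree, Real.rpow_add hx, Real.rpow_natCast, Real.rpow_mul hx.le, Real.rpow_natCast]
  ring

theorem weightedPart_mul_rpow (R : ℝ → ℝ → ℝ) (M γ : ℝ) {x : ℝ} (hx : 0 < x) (t : ℝ) :
    weightedPart R M γ x (t * x ^ M) = x ^ γ * weightedPart R M γ 1 t := by
  simp only [weightedPart, ← tsum_mul_left]
  refine tsum_congr fun p => ?_
  by_cases hp : weightedDegree M p = γ
  · simp only [indicator, mem_ofPred_eq, hp, if_true, mul_assoc, pow_mul_mul_rpow_pow hx, one_pow]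
    ring
  · simp [indicator, hp]

theorem tcoeff_pderiv2_snd (R : ℝ → ℝ → ℝ) (k a b : ℕ) :
    tcoeff (pderiv2 R 0 k) a b = tcoeff R a (b + k) * (b + k).descFactorial k := by
  have hpderiv : pderiv2 (pderiv2 R 0 k) a b 0 0 = pderiv2 R a (b + k) 0 0 := by
    simp only [pderiv2, iteratedDeriv_zero]
    simp only [iteratedDeriv_eq_iterate, Function.iterate_add_apply]
  have hfactorial : (b.factorial : ℝ) * (b + k).descFactorial k = (b + k).factorial := by
    simpa using congrArg (Nat.cast (R := ℝ)) (Nat.factorial_mul_descFactorial (Nat.le_add_left k b))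
  rw [tcoeff, tcoeff, hpderiv, ← hfactorial]
  have : ((b + k).descFactorial k : ℝ) ≠ 0 :=
    right_ne_zero_of_mul (a := (b.factorial : ℝ)) (by rw [hfactorial]; positivity)
  field_simp

theorem alphaM_sub_le_weightedDegree {R : ℝ → ℝ → ℝ} {M : ℝ} (hM : 0 ≤ M) {k : ℕ} {p : ℕ × ℕ}
    (hp : p ∈ tsupp (pderiv2 R 0 k)) : alphaM R M - k * M ≤ weightedDegree M p := by
  have hp' : (p.1, p.2 + k) ∈ tsupp R := by
    have : tcoeff (pderiv2 R 0 k) p.1 p.2 ≠ 0 := hp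
    rw [tcoeff_pderiv2_snd] at this
    exact left_ne_zero_of_mul this
  have := alphaM_le_weightedDegree hM hp'
  rw [weightedDegree_add_snd] at this
  linarith

theorem iteratedDeriv_weightedPart (R : ℝ → ℝ → ℝ) {M : ℝ} (hM : 0 < M) (γ : ℝ) (k : ℕ)
    (x y : ℝ) :
    iteratedDeriv k (weightedPart R M γ x) y
      = weightedPart (pderiv2 R 0 k) M (γ - k * M) x y := by
  have hfin := finite_setOf_weightedDegree_eq hM
  have hsum (R : ℝ → ℝ → ℝ) (γ : ℝ) : weightedPart R M γ x = fun y =>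
      ∑ p ∈ (hfin γ).toFinset, tcoeff R p.1 p.2 * x ^ p.1 * y ^ p.2 := by
    ext y
    rw [weightedPart_eq_sum_filter R (s := (hfin γ).toFinset) (by simp),
      Finset.filter_true_of_mem (by simp)]
  rw [hsum, hsum, iteratedDeriv_fun_sum fun p _ => by fun_prop]
  simp only [iteratedDeriv_const_mul_field, iteratedDeriv_pow]
  symm
  refine Finset.sum_of_injOn (fun p => (p.1, p.2 + k)) ?_ ?_ ?_ ?_
  · rintro ⟨a, b⟩ _ ⟨a', b'⟩ _ h
    simpa using h
  · intro p hp
    simp_all [weightedDegree_add_snd]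
  · rintro ⟨a, b⟩ hp hnotMem
    have hbk : b < k := by
      by_contra! hkb
      refine hnotMem ⟨(a, b - k), ?_, by simp [hkb]⟩
      have := weightedDegree_add_snd M (a, b - k) k
      simp_all
    simp [Nat.descFactorial_eq_zero_iff_lt.2 hbk]
  · intro p _
    rw [tcoeff_pderiv2_snd, Nat.add_sub_cancel]
    ring

end WeightedDegree

section WeightedCurve

open Asymptotics
open scoped ContDiff

variable {M β : ℝ} {S : Set ℝ}

theorem isLittleO_rpow_rpow_nhdsGT_zero {a b : ℝ} (h : b < a) :
    (fun x : ℝ => x ^ a) =o[𝓝[>] 0] fun x => x ^ b := by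
  have hpos : ∀ᶠ x : ℝ in 𝓝[>] 0, 0 < x := self_mem_nhdsWithin
  rw [isLittleO_iff_tendsto' (hpos.mono fun x hx h0 => absurd h0 (Real.rpow_pos_of_pos hx b).ne')]
  have hlim := (Real.continuousAt_rpow_const 0 (a - b) (.inr (sub_pos.2 h).le)).tendsto
  rw [Real.zero_rpow (sub_pos.2 h).ne'] at hlim
  exact (hlim.mono_left nhdsWithin_le_nhds).congr' (hpos.mono fun x hx => Real.rpow_sub hx a b)

-- In the filter `𝓝[>] 0 ×ˢ 𝓟 S` the factor `𝓟 S` makes the estimates uniform in `t = q.2 ∈ S`.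
theorem isLittleO_monomial_curve (hS : Bornology.IsBounded S) {p : ℕ × ℕ}
    (hp : β < weightedDegree M p) :
    (fun q : ℝ × ℝ => q.1 ^ p.1 * (q.2 * q.1 ^ M) ^ p.2)
      =o[𝓝[>] 0 ×ˢ 𝓟 S] fun q => q.1 ^ β := by
  obtain ⟨K, hK⟩ := hS.exists_norm_le
  have hbounded : (fun q : ℝ × ℝ => q.2 ^ p.2) =O[𝓝[>] 0 ×ˢ 𝓟 S] fun _ => (1 : ℝ) := by
    have hsnd : (fun q : ℝ × ℝ => q.2) =O[𝓝[>] 0 ×ˢ 𝓟 S] fun _ => (1 : ℝ) :=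
      .of_bound K <| eventually_prod_principal_iff.2 <| .of_forall fun x t ht => by
        simpa using hK t ht
    simpa only [one_pow] using hsnd.pow p.2
  have hpow := (isLittleO_rpow_rpow_nhdsGT_zero hp).comp_tendsto
    (tendsto_fst (f := 𝓝[>] (0 : ℝ)) (g := 𝓟 S))
  refine (hbounded.mul_isLittleO hpow).congr' ?_ (.of_forall fun q => one_mul _)
  filter_upwards [tendsto_fst.eventually (self_mem_nhdsWithin (s := Ioi (0 : ℝ)))] with q hq
  exact (pow_mul_mul_rpow_pow hq M q.2 p).symm

theorem tendsto_curve_nhds_zero (hM : 0 < M) (hS : Bornology.IsBounded S) :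
    Tendsto (fun q : ℝ × ℝ => (q.1, q.2 * q.1 ^ M)) (𝓝[>] 0 ×ˢ 𝓟 S) (𝓝 (0, 0)) := by
  have hsnd : Tendsto (fun q : ℝ × ℝ => q.2 * q.1 ^ M) (𝓝[>] 0 ×ˢ 𝓟 S) (𝓝 0) := by
    have := isLittleO_monomial_curve (M := M) (β := 0) hS (p := (0, 1)) (by simpa [weightedDegree])
    simpa [isLittleO_one_iff] using this
  exact (tendsto_fst.mono_right nhdsWithin_le_nhds).prodMk_nhds hsnd

theorem isLittleO_sub_weightedPart {F : ℝ → ℝ → ℝ} (hM : 0 < M) (hS : Bornology.IsBounded S)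
    (hF : ContDiffAt ℝ ∞ (fun p : ℝ × ℝ => F p.1 p.2) (0, 0))
    (hβ : ∀ p ∈ tsupp F, β ≤ weightedDegree M p) :
    (fun q : ℝ × ℝ => F q.1 (q.2 * q.1 ^ M) - weightedPart F M β q.1 (q.2 * q.1 ^ M))
      =o[𝓝[>] 0 ×ˢ 𝓟 S] fun q => q.1 ^ β := by
  obtain ⟨n, hn, hMn⟩ := exists_nat_weightedDegree_gt hM β
  have hn' : β < (n + 1 : ℕ) := hn.trans (by simp)
  have hMn' : β < M * (n + 1 : ℕ) := hMn.trans (by gcongr; simp)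
  have hpowers : (fun q : ℝ × ℝ => |q.1| ^ (n + 1) + |q.2 * q.1 ^ M| ^ (n + 1))
      =o[𝓝[>] 0 ×ˢ 𝓟 S] fun q => q.1 ^ β := by
    have hx : β < weightedDegree M (n + 1, 0) := by simpa [weightedDegree] using hn'
    have hy : β < weightedDegree M (0, n + 1) := by simpa [weightedDegree] using hMn'
    simpa only [norm_pow, Real.norm_eq_abs, pow_zero, one_mul, mul_one] using
      (isLittleO_monomial_curve hS hx).norm_left.add (isLittleO_monomial_curve hS hy).norm_left
  have hF_nat : ContDiffAt ℝ (2 * n + 1) (fun p : ℝ × ℝ => F p.1 p.2) (0, 0) :=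
    mod_cast contDiffAt_infty.1 hF (2 * n + 1)
  have hremainder := ((isBigO_sub_sum_tcoeff hF_nat).comp_tendsto
    (tendsto_curve_nhds_zero hM hS)).trans_isLittleO hpowers
  have hhigher : (fun q : ℝ × ℝ => ∑ p ∈ Finset.range (n + 1) ×ˢ Finset.range (n + 1)
      with weightedDegree M p ≠ β, tcoeff F p.1 p.2 * q.1 ^ p.1 * (q.2 * q.1 ^ M) ^ p.2)
      =o[𝓝[>] 0 ×ˢ 𝓟 S] fun q => q.1 ^ β := by
    refine .fun_sum fun p hp => ?_
    simp only [mul_assoc]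
    by_cases hp0 : tcoeff F p.1 p.2 = 0
    · simp [hp0]
    · exact (isLittleO_monomial_curve hS
        ((hβ p hp0).lt_of_ne' (Finset.mem_filter.1 hp).2)).const_mul_left _
  refine (hremainder.add hhigher).congr_left fun q => ?_
  rw [weightedPart_eq_sum_filter F fun p => mem_range_product_of_weightedDegree_eq hM hn' hMn']
  simp only [Function.comp_apply]
  rw [← Finset.sum_filter_add_sum_filter_not _ (fun p => weightedDegree M p = β)]
  ring

theorem isLittleO_pderiv2_sub_RMpart {R : ℝ → ℝ → ℝ} (hM : 0 < M) (hS : Bornology.IsBounded S)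
    (hR : ContDiffAt ℝ ∞ (fun p : ℝ × ℝ => R p.1 p.2) (0, 0)) (k : ℕ) :
    (fun q : ℝ × ℝ => pderiv2 R 0 k q.1 (q.2 * q.1 ^ M)
        - q.1 ^ (alphaM R M - k * M) * iteratedDeriv k (RMpart R M 1) q.2)
      =o[𝓝[>] 0 ×ˢ 𝓟 S] fun q => q.1 ^ (alphaM R M - k * M) := by
  have hsmooth : ContDiffAt ℝ ∞ (fun p : ℝ × ℝ => pderiv2 R 0 k p.1 p.2) (0, 0) := by
    simpa only [pderiv2, iteratedDeriv_zero] using contDiffAt_iteratedDeriv_snd (m := ∞) k le_rfl hR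
  refine (isLittleO_sub_weightedPart hM hS hsmooth
    fun p => alphaM_sub_le_weightedDegree hM.le).congr' ?_ .rfl
  filter_upwards [tendsto_fst.eventually (self_mem_nhdsWithin (s := Ioi (0 : ℝ)))] with q hq
  rw [RMpart_eq_weightedPart, iteratedDeriv_weightedPart R hM, weightedPart_mul_rpow _ _ _ hq]

end WeightedCurve

/-- Equation (2.19): if the `k`-th `y`-derivative of `R_M(1,⬝)` is bounded below on
`[r-δ₀, r+δ₀]`, then `|∂_y^k R(x,y)| > (C₀/2) x^{α-kM}` on the corresponding sliver. -/
theorem stmt_6 (R : ℝ → ℝ → ℝ) (U₀ : Set (ℝ × ℝ)) (hU₀ : U₀ ∈ 𝓝 ((0 : ℝ), (0 : ℝ)))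
    (hsm : ContDiffOn ℝ (⊤ : ℕ∞) (fun p : ℝ × ℝ => R p.1 p.2) U₀)
    (hts : (tsupp R).Nonempty)
    (M : ℝ) (hM : 0 < M) (k : ℕ) (hk : 1 ≤ k) (r δ₀ C₀ : ℝ) (hδ₀ : 0 < δ₀) (hC₀ : 0 < C₀)
    (hlow : ∀ y ∈ Set.Icc (r - δ₀) (r + δ₀),
      C₀ < |iteratedDeriv k (fun y' => RMpart R M 1 y') y|) :
    ∃ δ > (0 : ℝ), ∀ x y : ℝ,
      0 < x → x < δ → (r - δ₀) * x ^ M ≤ y → y ≤ (r + δ₀) * x ^ M →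
      C₀ / 2 * x ^ (alphaM R M - k * M) < |pderiv2 R 0 k x y| := by
  have hR := hsm.contDiffAt hU₀
  have hasymp := eventually_prod_principal_iff.1 <|
    (isLittleO_pderiv2_sub_RMpart hM (Metric.isBounded_Icc (r - δ₀) (r + δ₀)) hR k).def
      (half_pos hC₀)
  obtain ⟨δ, hδ, hsliver⟩ := mem_nhdsGT_iff_exists_Ioo_subset.1 hasymp
  refine ⟨δ, hδ, fun x y hx hxδ hy₁ hy₂ => ?_⟩
  have hxM : 0 < x ^ M := Real.rpow_pos_of_pos hx M
  have hxβ : 0 < x ^ (alphaM R M - k * M) := Real.rpow_pos_of_pos hx _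
  have ht : y / x ^ M ∈ Icc (r - δ₀) (r + δ₀) := ⟨(le_div_iff₀ hxM).2 hy₁, (div_le_iff₀ hxM).2 hy₂⟩
  have hclose := hsliver ⟨hx, hxδ⟩ _ ht
  simp only [div_mul_cancel₀ _ hxM.ne', Real.norm_eq_abs, abs_of_pos hxβ] at hclose
  have hmain : C₀ * x ^ (alphaM R M - k * M)
      < |x ^ (alphaM R M - k * M) * iteratedDeriv k (RMpart R M 1) (y / x ^ M)| := by
    rw [abs_mul, abs_of_pos hxβ, mul_comm]
    gcongr
    exact hlow _ ht
  have htriangle := abs_sub_abs_le_abs_sub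
    (x ^ (alphaM R M - k * M) * iteratedDeriv k (RMpart R M 1) (y / x ^ M)) (pderiv2 R 0 k x y)
  rw [abs_sub_comm] at htriangle
  linarith

end
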